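/- arXiv:1309.7192 — 2 statements merged into one kernel-verified Lean document; each statement's English description precedes it below -/
import Mathlib

section
/- Let K be an algebraically closed field of characteristic 0 and let a, b ≥ 1 be integers. If f, g ∈ K[x₀,x₁,y₀,y₁] are bihomogeneous of bidegree (a,b), not proportional to each other, and both define smooth curves, then there exist u, v ∈ K \ {0} and an admissible point P = (p₀,p₁,q₀,q₁) such that all four partial derivatives ∂/∂x₀, ∂/∂x₁, ∂/∂y₀, ∂/∂y₁ of u·f + v·g vanish at P. -/
noncomputable section
open MvPolynomial

variable {K : Type*} [Field K]

/-- `f` is bihomogeneous of bidegree `(a,b)` in the variables `x₀ = X 0`, `x₁ = X 1`,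
`y₀ = X 2`, `y₁ = X 3`. -/
def IsBihomogeneous (a b : ℕ) (f : MvPolynomial (Fin 4) K) : Prop :=
  ∀ m ∈ f.support, m 0 + m 1 = a ∧ m 2 + m 3 = b

/-- An admissible point of `K⁴`: `(p₀,p₁) ≠ (0,0)` and `(q₀,q₁) ≠ (0,0)`,
representing a point of `ℙ¹ × ℙ¹`. -/
def Admissible (P : Fin 4 → K) : Prop :=
  (P 0, P 1) ≠ (0, 0) ∧ (P 2, P 3) ≠ (0, 0)

/-- The curve defined by `f` on `ℙ¹ × ℙ¹` is smooth: the four partial derivatives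
of `f` have no common admissible zero. -/
def DefinesSmoothCurve (f : MvPolynomial (Fin 4) K) : Prop :=
  ∀ P : Fin 4 → K, Admissible P → ∃ i : Fin 4, eval P (pderiv i f) ≠ 0

/-- The first Jacobian space `J₁(f) = span_K {∂f/∂x₀, ∂f/∂x₁}`. -/
def J1 (f : MvPolynomial (Fin 4) K) : Submodule K (MvPolynomial (Fin 4) K) :=
  Submodule.span K {pderiv 0 f, pderiv 1 f}

/-- The second Jacobian space `J₂(f) = span_K {∂f/∂y₀, ∂f/∂y₁}`. -/
def J2 (f : MvPolynomial (Fin 4) K) : Submodule K (MvPolynomial (Fin 4) K) :=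
  Submodule.span K {pderiv 2 f, pderiv 3 f}



/-- Weights of the bigrading. -/
def biW : Fin 4 → ℕ × ℕ := ![(1, 0), (1, 0), (0, 1), (0, 1)]

lemma biW_weight (d : Fin 4 →₀ ℕ) :
    Finsupp.weight biW d = (d 0 + d 1, d 2 + d 3) := by
  rw [Finsupp.weight_apply, Finsupp.sum_fintype _ _ (by simp)]
  simp [Fin.sum_univ_four, biW, -nsmul_eq_mul]

/-- The bigraded pieces. -/
abbrev BB (K : Type*) [Field K] (m : ℕ × ℕ) : Submodule K (MvPolynomial (Fin 4) K) :=
  weightedHomogeneousSubmodule K biW m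

lemma isBihom_mem {a b : ℕ} {f : MvPolynomial (Fin 4) K} (h : IsBihomogeneous a b f) :
    f ∈ BB K (a, b) := by
  intro d hd
  have := h d (by simpa [mem_support_iff] using hd)
  rw [biW_weight, this.1, this.2]

/-- Exponents of bidegree `(m, n)`. -/
def expEquiv (m : ℕ × ℕ) :
    {d : Fin 4 →₀ ℕ | Finsupp.weight biW d = m} ≃ Fin (m.1 + 1) × Fin (m.2 + 1) where
  toFun d := (⟨d.1 0, by
      have := d.2; simp only [Set.mem_ofPred_eq, biW_weight] at this
      have := congrArg Prod.fst this; dsimp at this; omega⟩, ⟨d.1 2, by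
      have := d.2; simp only [Set.mem_ofPred_eq, biW_weight] at this
      have := congrArg Prod.snd this; dsimp at this; omega⟩)
  invFun p := ⟨Finsupp.equivFunOnFinite.symm ![p.1, m.1 - p.1, p.2, m.2 - p.2], by
      have h1 := p.1.2
      have h2 := p.2.2
      simp only [Set.mem_ofPred_eq, biW_weight]
      ext <;> simp <;> omega⟩
  left_inv d := by
    have := d.2
    simp only [Set.mem_ofPred_eq, biW_weight] at this
    ext i
    fin_cases i <;> simp [← this]
  right_inv p := by
    ext <;> simp

lemma BB_basis (m : ℕ × ℕ) :
    Nonempty (Module.Basis (Fin (m.1 + 1) × Fin (m.2 + 1)) K (BB K m)) := by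
  unfold BB
  rw [weightedHomogeneousSubmodule_eq_finsupp_supported]
  exact ⟨(basisRestrictSupport K {d | Finsupp.weight biW d = m}).reindex (expEquiv m)⟩

instance BB_finite (m : ℕ × ℕ) : Module.Finite K (BB K m) :=
  Module.Finite.of_basis (BB_basis m).some

lemma BB_finrank (m : ℕ × ℕ) : Module.finrank K (BB K m) = (m.1 + 1) * (m.2 + 1) := by
  rw [Module.finrank_eq_card_basis (BB_basis (K := K) m).some]
  simp

/-- The map `(p, q) ↦ p F + q G`. -/
def LL (F G : MvPolynomial (Fin 4) K) (s t : ℕ × ℕ) :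
    (BB K s × BB K t) →ₗ[K] MvPolynomial (Fin 4) K :=
  (LinearMap.mulRight K F ∘ₗ (BB K s).subtype).coprod
    (LinearMap.mulRight K G ∘ₗ (BB K t).subtype)

lemma LL_apply (F G : MvPolynomial (Fin 4) K) (s t : ℕ × ℕ) (p : BB K s × BB K t) :
    LL F G s t p = p.1 * F + p.2 * G := rfl

/-- The Koszul map `r ↦ (r G, - r F)`. -/
def JJ (F G : MvPolynomial (Fin 4) K) {c d r s t : ℕ × ℕ} (hF : F ∈ BB K c) (hG : G ∈ BB K d)
    (hs : r + d = s) (ht : r + c = t) : BB K r →ₗ[K] (BB K s × BB K t) :=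
  ((LinearMap.mulRight K G ∘ₗ (BB K r).subtype).codRestrict (BB K s) (by
    intro x; subst hs; exact IsWeightedHomogeneous.mul x.2 hG)).prod
  (-((LinearMap.mulRight K F ∘ₗ (BB K r).subtype).codRestrict (BB K t) (by
    intro x; subst ht; exact IsWeightedHomogeneous.mul x.2 hF)))

lemma finrank_range_le (F G : MvPolynomial (Fin 4) K) {c d r s t : ℕ × ℕ}
    (hF : F ∈ BB K c) (hG : G ∈ BB K d)
    (hs : r + d = s) (ht : r + c = t) (h0 : F ≠ 0 ∨ G ≠ 0) :
    Module.finrank K (LinearMap.range (LL F G s t)) + Module.finrank K (BB K r) ≤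
      Module.finrank K (BB K s) + Module.finrank K (BB K t) := by
  rw [← Module.finrank_prod (M := BB K s), ← LinearMap.finrank_range_add_finrank_ker (LL F G s t)]
  gcongr
  have hk : ∀ x, JJ F G hF hG hs ht x ∈ LinearMap.ker (LL F G s t) := by
    intro x
    rw [LinearMap.mem_ker, LL_apply]
    change (x : MvPolynomial (Fin 4) K) * G * F + (-(x * F)) * G = 0
    ring
  refine LinearMap.finrank_le_finrank_of_injective
    (f := (JJ F G hF hG hs ht).codRestrict _ hk) ?_
  refine (injective_iff_map_eq_zero _).2 fun x hx' => ?_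
  have hx : JJ F G hF hG hs ht x = 0 := congrArg Subtype.val hx'
  have h1 : (x : MvPolynomial (Fin 4) K) * G = 0 := congrArg (fun z => (z.1 : MvPolynomial (Fin 4) K)) hx
  have h2 : -((x : MvPolynomial (Fin 4) K) * F) = 0 := congrArg (fun z => (z.2 : MvPolynomial (Fin 4) K)) hx
  ext1
  rcases h0 with h0 | h0
  · simpa [h0] using h2
  · simpa [h0] using h1

lemma comp_mul {F α : MvPolynomial (Fin 4) K} {c s : ℕ × ℕ} (hF : F ∈ BB K c) :
    weightedHomogeneousComponent biW (s + c) (α * F)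
      = weightedHomogeneousComponent biW s α * F := by
  letI : GradedAlgebra (BB K) := weightedGradedAlgebra K biW
  have h := DirectSum.coe_decompose_mul_add_of_right_mem (BB K) (i := s) (a := α) hF
  rw [← weightedDecomposition.decompose'_apply, ← weightedDecomposition.decompose'_apply]
  exact h

lemma le_finrank_range (F G : MvPolynomial (Fin 4) K) {c d r s t : ℕ × ℕ}
    (hF : F ∈ BB K c) (hG : G ∈ BB K d)
    (hs : r + d = s) (ht : r + c = t) (h0 : F ≠ 0) (hFG : IsRelPrime F G) :
      Module.finrank K (BB K s) + Module.finrank K (BB K t) ≤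
    Module.finrank K (LinearMap.range (LL F G s t)) + Module.finrank K (BB K r) := by
  rw [← Module.finrank_prod (M := BB K s), ← LinearMap.finrank_range_add_finrank_ker (LL F G s t)]
  gcongr
  refine le_trans (Submodule.finrank_mono (?_ : _ ≤ LinearMap.range (JJ F G hF hG hs ht)))
    (LinearMap.finrank_range_le _)
  rintro ⟨⟨p, hp⟩, ⟨q, hq⟩⟩ h
  rw [LinearMap.mem_ker, LL_apply] at h
  change p * F + q * G = 0 at h
  have hd : F ∣ q * G := ⟨-p, by linear_combination h⟩
  obtain ⟨u, rfl⟩ := hFG.dvd_of_dvd_mul_right hd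
  refine ⟨⟨weightedHomogeneousComponent biW r (-u), weightedHomogeneousComponent_mem _ _ _⟩, ?_⟩
  have e2 : -(weightedHomogeneousComponent biW r (-u) * F) = F * u := by
    rw [← comp_mul hF, ht, ← map_neg]
    rw [show -(-u * F) = F * u by ring]
    exact weightedHomogeneousComponent_eq_self hq
  have e1 : weightedHomogeneousComponent biW r (-u) * G = p := by
    apply mul_right_cancel₀ h0
    linear_combination -h - G * e2
  exact Prod.ext (Subtype.ext e1) (Subtype.ext e2)

lemma mem_range_LL {F G h : MvPolynomial (Fin 4) K} {c d n s t : ℕ × ℕ}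
    (hF : F ∈ BB K c) (hG : G ∈ BB K d) (hs : s + c = n) (ht : t + d = n)
    (hh : h ∈ BB K n) (hI : h ∈ Ideal.span {F, G}) : h ∈ LinearMap.range (LL F G s t) := by
  obtain ⟨α, β, e⟩ := Ideal.mem_span_pair.1 hI
  refine ⟨(⟨weightedHomogeneousComponent biW s α, weightedHomogeneousComponent_mem _ _ _⟩,
    ⟨weightedHomogeneousComponent biW t β, weightedHomogeneousComponent_mem _ _ _⟩), ?_⟩
  rw [LL_apply]
  change weightedHomogeneousComponent biW s α * F + weightedHomogeneousComponent biW t β * G = h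
  rw [← comp_mul hF, ← comp_mul hG, hs, ht, ← map_add, e]
  exact weightedHomogeneousComponent_eq_self hh

/-- Large bidegree elements multiply `h` into `I`. -/
lemma mul_mem_of_large {I : Ideal (MvPolynomial (Fin 4) K)} {h p : MvPolynomial (Fin 4) K} {N : ℕ}
    (H : ∀ i j : Fin 4, i < 2 → 2 ≤ j → h * (X i * X j) ^ N ∈ I) {m : ℕ × ℕ}
    (h1 : 2 * N ≤ m.1) (h2 : 2 * N ≤ m.2) (hp : p ∈ BB K m) : p * h ∈ I := by
  rw [p.as_sum, Finset.sum_mul]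
  refine Ideal.sum_mem _ fun e he => ?_
  have hw := hp (mem_support_iff.1 he)
  rw [biW_weight] at hw
  have hw1 : e 0 + e 1 = m.1 := by rw [← hw]
  have hw2 : e 2 + e 3 = m.2 := by rw [← hw]
  have key : ∀ i j : Fin 4, i < 2 → 2 ≤ j → N ≤ e i → N ≤ e j → monomial e (coeff e p) * h ∈ I := by
    intro i j hi hj hei hej
    have hij : i ≠ j := by rintro rfl; exact absurd hi (not_lt.2 hj)
    have hle : Finsupp.single i N + Finsupp.single j N ≤ e := by
      intro k
      simp only [Finsupp.add_apply, Finsupp.single_apply]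
      split_ifs with h1 h2 h2
      · exact absurd (h1.trans h2.symm) hij
      · subst h1; simpa using hei
      · subst h2; simpa using hej
      · simp
    obtain ⟨e', rfl⟩ := exists_add_of_le hle
    have : monomial (Finsupp.single i N + Finsupp.single j N + e')
        (coeff (Finsupp.single i N + Finsupp.single j N + e') p) * h =
        monomial e' (coeff (Finsupp.single i N + Finsupp.single j N + e') p) *
          (h * (X i * X j) ^ N) := by
      rw [mul_pow, X_pow_eq_monomial, X_pow_eq_monomial, mul_left_comm, monomial_mul, monomial_mul,
        mul_comm h]
      simp [add_comm]
    rw [this]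
    exact Ideal.mul_mem_left _ _ (H i j hi hj)
  have c1 : N ≤ e 0 ∨ N ≤ e 1 := by omega
  have c2 : N ≤ e 2 ∨ N ≤ e 3 := by omega
  rcases c1 with c1 | c1 <;> rcases c2 with c2 | c2
  · exact key 0 2 (by decide) (by decide) c1 c2
  · exact key 0 3 (by decide) (by decide) c1 c2
  · exact key 1 2 (by decide) (by decide) c1 c2
  · exact key 1 3 (by decide) (by decide) c1 c2

/-- Minors of the Jacobian matrix. -/
def MM (f g : MvPolynomial (Fin 4) K) (i j : Fin 4) : MvPolynomial (Fin 4) K :=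
  pderiv i f * pderiv j g - pderiv j f * pderiv i g

lemma adm_X {P : Fin 4 → K} (hP : ¬ Admissible P) {i j : Fin 4} (hi : i < 2) (hj : 2 ≤ j) :
    P i * P j = 0 := by
  unfold Admissible at hP
  rw [not_and_or, not_ne_iff, not_ne_iff, Prod.mk.injEq, Prod.mk.injEq] at hP
  fin_cases i <;> fin_cases j <;> simp_all <;> first | omega | (rcases hP with hP | hP <;> simp [hP])

lemma null_pow [IsAlgClosed K] {f g : MvPolynomial (Fin 4) K}
    (h : ∀ P : Fin 4 → K, Admissible P → ∃ i j, eval P (MM f g i j) ≠ 0) :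
    ∃ N : ℕ, ∀ i j : Fin 4, i < 2 → 2 ≤ j →
      (X i * X j) ^ N ∈ Ideal.span (Set.range fun q : Fin 4 × Fin 4 => MM f g q.1 q.2) := by
  set J := Ideal.span (Set.range fun q : Fin 4 × Fin 4 => MM f g q.1 q.2) with hJ
  have h1 : ∀ i j : Fin 4, ∃ N : ℕ, i < 2 → 2 ≤ j → (X i * X j) ^ N ∈ J := by
    intro i j
    by_cases hi : i < 2
    swap
    · exact ⟨0, fun h => absurd h hi⟩
    by_cases hj : 2 ≤ j
    swap
    · exact ⟨0, fun _ h => absurd h hj⟩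
    have : (X i * X j : MvPolynomial (Fin 4) K) ∈ J.radical := by
      rw [← vanishingIdeal_zeroLocus_eq_radical (K := K), mem_vanishingIdeal_iff]
      intro P hP
      have hna : ¬ Admissible P := by
        intro hA
        obtain ⟨k, l, hkl⟩ := h P hA
        apply hkl
        have := hP (MM f g k l) (Ideal.subset_span ⟨(k, l), rfl⟩)
        simpa [aeval_eq_eval] using this
      simpa using adm_X hna hi hj
    obtain ⟨N, hN⟩ := this
    exact ⟨N, fun _ _ => hN⟩
  choose N hN using h1
  refine ⟨∑ i, ∑ j, N i j, fun i j hi hj => ?_⟩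
  have hle : N i j ≤ ∑ i, ∑ j, N i j :=
    (Finset.single_le_sum (f := fun j => N i j) (fun _ _ => Nat.zero_le _) (Finset.mem_univ j)).trans
      (Finset.single_le_sum (f := fun i => ∑ j, N i j) (fun _ _ => Nat.zero_le _) (Finset.mem_univ i))
  exact Ideal.pow_mem_of_pow_mem _ (hN i j hi hj) hle

lemma relPrime [IsAlgClosed K] {f g : MvPolynomial (Fin 4) K} (hf0 : f ≠ 0)
    (h : ∀ P : Fin 4 → K, Admissible P → ∃ i j, eval P (MM f g i j) ≠ 0) : IsRelPrime f g := by
  apply WfDvdMonoid.isRelPrime_of_no_irreducible_factors (fun h => hf0 h.1)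
  rintro z hz ⟨f', rfl⟩ ⟨g', rfl⟩
  have hzp : Prime z := hz.prime
  have hprime : (Ideal.span {z}).IsPrime := (Ideal.span_singleton_prime hzp.ne_zero).2 hzp
  have hd : ∀ i j : Fin 4, i < 2 → 2 ≤ j → z ∣ X i * X j := by
    intro i j hi hj
    rw [← Ideal.mem_span_singleton, ← IsPrime.vanishingIdeal_zeroLocus (K := K) (Ideal.span {z}),
      mem_vanishingIdeal_iff]
    intro P hP
    have hz0 : eval P z = 0 := by
      simpa [aeval_eq_eval] using hP z (Ideal.subset_span rfl)
    have hna : ¬ Admissible P := by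
      intro hA
      obtain ⟨k, l, hkl⟩ := h P hA
      apply hkl
      simp only [MM, pderiv_mul, map_sub, map_mul, map_add, hz0]
      ring
    simpa using adm_X hna hi hj
  have hne : ∀ i j : Fin 4, z ∣ X i → z ∣ X j → i = j := by
    intro i j hi hj
    by_contra hij
    have a1 := (hz.dvd_symm (X_prime (i := i)).irreducible hi).trans hj
    exact hij (X_dvd_X.1 a1)
  have d1 := hzp.dvd_or_dvd (hd 0 2 (by decide) (by decide))
  have d2 := hzp.dvd_or_dvd (hd 1 3 (by decide) (by decide))
  rcases d1 with d1 | d1 <;> rcases d2 with d2 | d2 <;> exact absurd (hne _ _ d1 d2) (by decide)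

lemma euler_x {a b : ℕ} {f : MvPolynomial (Fin 4) K} (h : IsBihomogeneous a b f) :
    X 0 * pderiv 0 f + X 1 * pderiv 1 f = (a : MvPolynomial (Fin 4) K) * f := by
  have hw : IsWeightedHomogeneous (![1, 1, 0, 0] : Fin 4 → ℕ) f a := by
    intro d hd
    have := (h d (mem_support_iff.2 hd)).1
    rw [Finsupp.weight_apply, Finsupp.sum_fintype _ _ (by simp)]
    simpa [Fin.sum_univ_four] using this
  have := hw.sum_weight_X_mul_pderiv
  simpa [Fin.sum_univ_four] using this

lemma euler_y {a b : ℕ} {f : MvPolynomial (Fin 4) K} (h : IsBihomogeneous a b f) :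
    X 2 * pderiv 2 f + X 3 * pderiv 3 f = (b : MvPolynomial (Fin 4) K) * f := by
  have hw : IsWeightedHomogeneous (![0, 0, 1, 1] : Fin 4 → ℕ) f b := by
    intro d hd
    have := (h d (mem_support_iff.2 hd)).2
    rw [Finsupp.weight_apply, Finsupp.sum_fintype _ _ (by simp)]
    simpa [Fin.sum_univ_four] using this
  have := hw.sum_weight_X_mul_pderiv
  simpa [Fin.sum_univ_four] using this

lemma mem_of_nat_mul [CharZero K] {I : Ideal (MvPolynomial (Fin 4) K)} {a : ℕ} (ha : 1 ≤ a)
    {h : MvPolynomial (Fin 4) K} (H : (a : MvPolynomial (Fin 4) K) * h ∈ I) : h ∈ I := by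
  have e : h = C ((a : K)⁻¹) * ((a : MvPolynomial (Fin 4) K) * h) := by
    rw [← mul_assoc, ← map_natCast (C : K →+* MvPolynomial (Fin 4) K) a, ← map_mul,
      inv_mul_cancel₀ (Nat.cast_ne_zero.2 (by omega)), map_one, one_mul]
  rw [e]
  exact I.mul_mem_left _ H

lemma cross_mem [CharZero K] {a b : ℕ} (ha : 1 ≤ a) (hb : 1 ≤ b)
    {f g : MvPolynomial (Fin 4) K}
    (hf : IsBihomogeneous a b f) (hg : IsBihomogeneous a b g) (i : Fin 4) :
    f * pderiv i g - g * pderiv i f ∈ Ideal.span {MM f g 0 1, MM f g 2 3} := by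
  have m1 : MM f g 0 1 ∈ Ideal.span {MM f g 0 1, MM f g 2 3} := Ideal.subset_span (by simp)
  have m2 : MM f g 2 3 ∈ Ideal.span {MM f g 0 1, MM f g 2 3} := Ideal.subset_span (by simp)
  have ex := euler_x hf
  have ex' := euler_x hg
  have ey := euler_y hf
  have ey' := euler_y hg
  fin_cases i
  · apply mem_of_nat_mul ha
    convert Ideal.mul_mem_left _ (-X 1) m1 using 1
    simp only [MM]
    dsimp
    linear_combination -pderiv 0 g * ex + pderiv 0 f * ex'
  · apply mem_of_nat_mul ha
    convert Ideal.mul_mem_left _ (X 0) m1 using 1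
    simp only [MM]
    dsimp
    linear_combination -pderiv 1 g * ex + pderiv 1 f * ex'
  · apply mem_of_nat_mul hb
    convert Ideal.mul_mem_left _ (-X 3) m2 using 1
    simp only [MM]
    dsimp
    linear_combination -pderiv 2 g * ey + pderiv 2 f * ey'
  · apply mem_of_nat_mul hb
    convert Ideal.mul_mem_left _ (X 2) m2 using 1
    simp only [MM]
    dsimp
    linear_combination -pderiv 3 g * ey + pderiv 3 f * ey'

lemma mul_minor_mem [CharZero K] {a b : ℕ} (ha : 1 ≤ a) (hb : 1 ≤ b)
    {f g : MvPolynomial (Fin 4) K}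
    (hf : IsBihomogeneous a b f) (hg : IsBihomogeneous a b g) (i j : Fin 4) :
    f * MM f g i j ∈ Ideal.span {MM f g 0 1, MM f g 2 3} ∧
    g * MM f g i j ∈ Ideal.span {MM f g 0 1, MM f g 2 3} := by
  have ci := cross_mem ha hb hf hg i
  have cj := cross_mem ha hb hf hg j
  constructor
  · convert sub_mem (Ideal.mul_mem_left _ (pderiv i f) cj) (Ideal.mul_mem_left _ (pderiv j f) ci)
      using 1
    simp only [MM]; ring
  · convert sub_mem (Ideal.mul_mem_left _ (pderiv i g) cj) (Ideal.mul_mem_left _ (pderiv j g) ci)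
      using 1
    simp only [MM]; ring

lemma mul_mem_of_mem_span {I : Ideal (MvPolynomial (Fin 4) K)} {f g h : MvPolynomial (Fin 4) K}
    (H : ∀ i j, h * MM f g i j ∈ I) {p : MvPolynomial (Fin 4) K}
    (hp : p ∈ Ideal.span (Set.range fun q : Fin 4 × Fin 4 => MM f g q.1 q.2)) : h * p ∈ I := by
  induction hp using Submodule.span_induction with
  | mem x hx => obtain ⟨q, rfl⟩ := hx; exact H _ _
  | zero => simp
  | add x y _ _ hx hy => rw [mul_add]; exact add_mem hx hy
  | smul c x _ hx => rw [smul_eq_mul, mul_left_comm]; exact Ideal.mul_mem_left _ _ hx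

lemma exists_dependent [IsAlgClosed K] [CharZero K]
    (a b : ℕ) (f g : MvPolynomial (Fin 4) K)
    (hfbi : IsBihomogeneous (a + 1) (b + 1) f) (hgbi : IsBihomogeneous (a + 1) (b + 1) g)
    (hf0 : f ≠ 0) :
    ∃ P : Fin 4 → K, Admissible P ∧ ∀ i j, eval P (MM f g i j) = 0 := by
  by_contra hcon
  have h : ∀ P : Fin 4 → K, Admissible P → ∃ i j, eval P (MM f g i j) ≠ 0 := by
    intro P hP
    by_contra hh
    exact hcon ⟨P, hP, by simpa using hh⟩
  have hrel := relPrime hf0 h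
  obtain ⟨N, hN⟩ := null_pow h
  have hmin := mul_minor_mem (Nat.le_add_left 1 a) (Nat.le_add_left 1 b) hfbi hgbi
  have Hf : ∀ i j : Fin 4, i < 2 → 2 ≤ j → f * (X i * X j) ^ N ∈
      Ideal.span {MM f g 0 1, MM f g 2 3} := fun i j hi hj =>
    mul_mem_of_mem_span (fun i j => (hmin i j).1) (hN i j hi hj)
  have Hg : ∀ i j : Fin 4, i < 2 → 2 ≤ j → g * (X i * X j) ^ N ∈
      Ideal.span {MM f g 0 1, MM f g 2 3} := fun i j hi hj =>
    mul_mem_of_mem_span (fun i j => (hmin i j).2) (hN i j hi hj)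
  have hfB := isBihom_mem hfbi
  have hgB := isBihom_mem hgbi
  have dx : ∀ {u : MvPolynomial (Fin 4) K}, u ∈ BB K (a + 1, b + 1) →
      pderiv 0 u ∈ BB K (a, b + 1) ∧ pderiv 1 u ∈ BB K (a, b + 1) ∧
      pderiv 2 u ∈ BB K (a + 1, b) ∧ pderiv 3 u ∈ BB K (a + 1, b) := fun hu =>
    ⟨IsWeightedHomogeneous.pderiv hu rfl, IsWeightedHomogeneous.pderiv hu rfl,
      IsWeightedHomogeneous.pderiv hu rfl, IsWeightedHomogeneous.pderiv hu rfl⟩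
  obtain ⟨f0, f1, f2, f3⟩ := dx hfB
  obtain ⟨g0, g1, g2, g3⟩ := dx hgB
  have hD : MM f g 0 1 ∈ BB K ((a, b + 1) + (a, b + 1)) :=
    sub_mem (IsWeightedHomogeneous.mul f0 g1) (IsWeightedHomogeneous.mul f1 g0)
  have hE : MM f g 2 3 ∈ BB K ((a + 1, b) + (a + 1, b)) :=
    sub_mem (IsWeightedHomogeneous.mul f2 g3) (IsWeightedHomogeneous.mul f3 g2)
  have hDE : MM f g 0 1 ≠ 0 ∨ MM f g 2 3 ≠ 0 := by
    by_contra hz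
    push Not at hz
    have := Hf 0 2 (by decide) (by decide)
    rw [hz.1, hz.2] at this
    simp [hf0, X_ne_zero] at this
  have up := finrank_range_le (MM f g 0 1) (MM f g 2 3) hD hE
    (r := (2 * N + 2, 2 * N + 2)) (s := (2 * a + 4 + 2 * N, 2 * b + 2 + 2 * N))
    (t := (2 * a + 2 + 2 * N, 2 * b + 4 + 2 * N))
    (by ext <;> simp <;> ring) (by ext <;> simp <;> ring) hDE
  have lo := le_finrank_range f g hfB hgB
    (r := (2 * a + 2 + 2 * N, 2 * b + 2 + 2 * N)) (s := (3 * a + 3 + 2 * N, 3 * b + 3 + 2 * N))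
    (t := (3 * a + 3 + 2 * N, 3 * b + 3 + 2 * N))
    (by ext <;> simp <;> ring) (by ext <;> simp <;> ring) hf0 hrel
  have hle : LinearMap.range (LL f g (3 * a + 3 + 2 * N, 3 * b + 3 + 2 * N)
      (3 * a + 3 + 2 * N, 3 * b + 3 + 2 * N)) ≤
      LinearMap.range (LL (MM f g 0 1) (MM f g 2 3) (2 * a + 4 + 2 * N, 2 * b + 2 + 2 * N)
        (2 * a + 2 + 2 * N, 2 * b + 4 + 2 * N)) := by
    rintro _ ⟨⟨⟨p, hp⟩, ⟨q, hq⟩⟩, rfl⟩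
    rw [LL_apply]
    refine mem_range_LL (n := (3 * a + 3 + 2 * N, 3 * b + 3 + 2 * N) + (a + 1, b + 1)) hD hE
      (by ext <;> simp <;> ring) (by ext <;> simp <;> ring) ?_ ?_
    · exact add_mem (IsWeightedHomogeneous.mul hp hfB) (IsWeightedHomogeneous.mul hq hgB)
    · refine add_mem (mul_mem_of_large Hf ?_ ?_ hp) (mul_mem_of_large Hg ?_ ?_ hq) <;>
        dsimp <;> omega
  have hfin := Submodule.finrank_mono hle
  simp only [BB_finrank] at up lo
  nlinarith [Nat.zero_le (a * b)]

/-- The pencil spanned by two non-proportional smooth members of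
`|O_Q(a,b)|` contains a singular member, necessarily with both coefficients
nonzero. -/
theorem pencil_contains_singular_member
    {K : Type*} [Field K] [IsAlgClosed K] [CharZero K]
    (a b : ℕ) (ha : 1 ≤ a) (hb : 1 ≤ b)
    (f g : MvPolynomial (Fin 4) K)
    (hfbi : IsBihomogeneous a b f) (hgbi : IsBihomogeneous a b g)
    (hprop : ¬ ∃ c : K, g = c • f ∨ f = c • g)
    (hfsm : DefinesSmoothCurve f) (hgsm : DefinesSmoothCurve g) :
    ∃ (u v : K) (P : Fin 4 → K), u ≠ 0 ∧ v ≠ 0 ∧ Admissible P ∧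
      ∀ i : Fin 4, eval P (pderiv i (C u * f + C v * g)) = 0 := by
  obtain ⟨a, rfl⟩ : ∃ a', a = a' + 1 := ⟨a - 1, by omega⟩
  obtain ⟨b, rfl⟩ : ∃ b', b = b' + 1 := ⟨b - 1, by omega⟩
  have hf0 : f ≠ 0 := by
    rintro rfl
    exact hprop ⟨0, Or.inr (by simp)⟩
  obtain ⟨P, hP, hM⟩ := exists_dependent a b f g hfbi hgbi hf0
  have hM' : ∀ i j, eval P (pderiv i f) * eval P (pderiv j g)
      - eval P (pderiv j f) * eval P (pderiv i g) = 0 := by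
    intro i j
    simpa [MM] using hM i j
  obtain ⟨i, hi⟩ := hfsm P hP
  obtain ⟨j, hj⟩ := hgsm P hP
  refine ⟨-eval P (pderiv i g), eval P (pderiv i f), P, ?_, hi, hP, ?_⟩
  · intro h0
    have h0' : eval P (pderiv i g) = 0 := neg_eq_zero.1 h0
    have := hM' i j
    rw [h0', mul_zero, sub_zero] at this
    exact (mul_ne_zero hi hj) this
  · intro k
    rw [map_add, pderiv_C_mul, pderiv_C_mul, map_add, map_mul, map_mul, eval_C, eval_C]
    linear_combination hM' i k
end
end

section
/- Let K be an algebraically closed field of characteristic 0, let a, b ≥ 2 be integers, and let f ∈ K[x₀,x₁,y₀,y₁] be bihomogeneous of bidegree (a,b) defining a smooth curve. Suppose p₀, p₁ are in the K-span of {x₀, x₁}, q₀, q₁ are in the K-span of {y₀, y₁}, and c ∈ K, with p₀·∂f/∂x₀ + p₁·∂f/∂x₁ + q₀·∂f/∂y₀ + q₁·∂f/∂y₁ = c·f. Then there exist s, t ∈ K such that p₀ = s·x₀, p₁ = s·x₁, q₀ = t·y₀, and q₁ = t·y₁. -/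
noncomputable section
open MvPolynomial

variable {K : Type*} [Field K]

section aux
variable {K : Type*} [Field K]

def pt (v w : Fin 2 → K) : Fin 4 → K := ![v 0, v 1, w 0, w 1]

def dl (A B : Fin 2 → Fin 2 → K) (h : MvPolynomial (Fin 4) K) : MvPolynomial (Fin 4) K :=
  (C (A 0 0) * X 0 + C (A 0 1) * X 1) * pderiv 0 h +
  (C (A 1 0) * X 0 + C (A 1 1) * X 1) * pderiv 1 h +
  (C (B 0 0) * X 2 + C (B 0 1) * X 3) * pderiv 2 h +
  (C (B 1 0) * X 2 + C (B 1 1) * X 3) * pderiv 3 h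

def dx (u : Fin 2 → K) (h : MvPolynomial (Fin 4) K) : MvPolynomial (Fin 4) K :=
  C (u 0) * pderiv 0 h + C (u 1) * pderiv 1 h

def dy (u : Fin 2 → K) (h : MvPolynomial (Fin 4) K) : MvPolynomial (Fin 4) K :=
  C (u 0) * pderiv 2 h + C (u 1) * pderiv 3 h

def EX (m : K) (h : MvPolynomial (Fin 4) K) : Prop :=
  X 0 * pderiv 0 h + X 1 * pderiv 1 h = C m * h

def EY (m : K) (h : MvPolynomial (Fin 4) K) : Prop :=
  X 2 * pderiv 2 h + X 3 * pderiv 3 h = C m * h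

lemma pd_comm (i j : Fin 4) (h : MvPolynomial (Fin 4) K) :
    pderiv i (pderiv j h) = pderiv j (pderiv i h) := by
  have : ⁅(pderiv i : Derivation K (MvPolynomial (Fin 4) K) (MvPolynomial (Fin 4) K)),
      (pderiv j : Derivation K (MvPolynomial (Fin 4) K) (MvPolynomial (Fin 4) K))⁆ = 0 := by
    apply MvPolynomial.derivation_ext
    intro k
    rw [Derivation.commutator_apply]
    simp only [pderiv_X, Pi.single_apply]
    split_ifs <;> simp
  have h2 := congrArg (fun d => d h) this
  simp only [Derivation.commutator_apply] at h2
  exact sub_eq_zero.mp h2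

lemma pt_0 (v w : Fin 2 → K) : pt v w 0 = v 0 := rfl
lemma pt_1 (v w : Fin 2 → K) : pt v w 1 = v 1 := rfl
lemma pt_2 (v w : Fin 2 → K) : pt v w 2 = w 0 := rfl
lemma pt_3 (v w : Fin 2 → K) : pt v w 3 = w 1 := rfl

lemma dx_dl (A B : Fin 2 → Fin 2 → K) (u v : Fin 2 → K) (l t : K)
    (h0 : A 0 0 * u 0 + A 0 1 * u 1 = l * u 0 + t * v 0)
    (h1 : A 1 0 * u 0 + A 1 1 * u 1 = l * u 1 + t * v 1) (h : MvPolynomial (Fin 4) K) :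
    dx u (dl A B h) = dl A B (dx u h) + C l * dx u h + C t * dx v h := by
  have e0 := congrArg (C (σ := Fin 4)) h0
  have e1 := congrArg (C (σ := Fin 4)) h1
  simp only [map_add, map_mul] at e0 e1
  simp [dx, dl, Derivation.leibniz, pd_comm 1 0, pd_comm 2 0, pd_comm 3 0, pd_comm 2 1,
    pd_comm 3 1, pd_comm 3 2]
  linear_combination (pderiv 0 h) * e0 + (pderiv 1 h) * e1

lemma dy_dl (A B : Fin 2 → Fin 2 → K) (u v : Fin 2 → K) (l t : K)
    (h0 : B 0 0 * u 0 + B 0 1 * u 1 = l * u 0 + t * v 0)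
    (h1 : B 1 0 * u 0 + B 1 1 * u 1 = l * u 1 + t * v 1) (h : MvPolynomial (Fin 4) K) :
    dy u (dl A B h) = dl A B (dy u h) + C l * dy u h + C t * dy v h := by
  have e0 := congrArg (C (σ := Fin 4)) h0
  have e1 := congrArg (C (σ := Fin 4)) h1
  simp only [map_add, map_mul] at e0 e1
  simp [dy, dl, Derivation.leibniz, pd_comm 1 0, pd_comm 2 0, pd_comm 3 0, pd_comm 2 1,
    pd_comm 3 1, pd_comm 3 2]
  linear_combination (pderiv 2 h) * e0 + (pderiv 3 h) * e1

lemma EX_dx {m : K} {h : MvPolynomial (Fin 4) K} (H : EX m h) (u : Fin 2 → K) :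
    EX (m - 1) (dx u h) := by
  have e0 := congrArg (pderiv 0) H
  have e1 := congrArg (pderiv 1) H
  simp [Derivation.leibniz] at e0 e1
  simp only [EX, dx, map_sub, map_one, map_add, Derivation.leibniz, pderiv_C, smul_eq_mul, mul_zero,
    add_zero]
  rw [pd_comm 1 0] at *
  linear_combination C (u 0) * e0 + C (u 1) * e1

lemma EX_dy {m : K} {h : MvPolynomial (Fin 4) K} (H : EX m h) (u : Fin 2 → K) :
    EX m (dy u h) := by
  have e0 := congrArg (pderiv 2) H
  have e1 := congrArg (pderiv 3) H
  simp [Derivation.leibniz] at e0 e1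
  simp only [EX, dy, map_sub, map_one, map_add, Derivation.leibniz, pderiv_C, smul_eq_mul, mul_zero,
    add_zero]
  simp only [pd_comm 2 0, pd_comm 3 0, pd_comm 2 1, pd_comm 3 1] at *
  linear_combination C (u 0) * e0 + C (u 1) * e1

lemma EY_dy {m : K} {h : MvPolynomial (Fin 4) K} (H : EY m h) (u : Fin 2 → K) :
    EY (m - 1) (dy u h) := by
  have e0 := congrArg (pderiv 2) H
  have e1 := congrArg (pderiv 3) H
  simp [Derivation.leibniz] at e0 e1
  simp only [EY, dy, map_sub, map_one, map_add, Derivation.leibniz, pderiv_C, smul_eq_mul, mul_zero,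
    add_zero]
  rw [pd_comm 3 2] at *
  linear_combination C (u 0) * e0 + C (u 1) * e1

lemma EY_dx {m : K} {h : MvPolynomial (Fin 4) K} (H : EY m h) (u : Fin 2 → K) :
    EY m (dx u h) := by
  have e0 := congrArg (pderiv 0) H
  have e1 := congrArg (pderiv 1) H
  simp [Derivation.leibniz] at e0 e1
  simp only [EY, dx, map_sub, map_one, map_add, Derivation.leibniz, pderiv_C, smul_eq_mul, mul_zero,
    add_zero]
  simp only [pd_comm 2 0, pd_comm 3 0, pd_comm 2 1, pd_comm 3 1] at *
  linear_combination C (u 0) * e0 + C (u 1) * e1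

/-- eval of `dl` at a point whose first component is an eigenvector. -/
lemma ev_dl {A B : Fin 2 → Fin 2 → K} {v w z : Fin 2 → K} {l k t m n : K}
    {h : MvPolynomial (Fin 4) K} (HX : EX m h) (HY : EY n h)
    (h0 : A 0 0 * v 0 + A 0 1 * v 1 = l * v 0)
    (h1 : A 1 0 * v 0 + A 1 1 * v 1 = l * v 1)
    (h2 : B 0 0 * w 0 + B 0 1 * w 1 = k * w 0 + t * z 0)
    (h3 : B 1 0 * w 0 + B 1 1 * w 1 = k * w 1 + t * z 1) :
    eval (pt v w) (dl A B h) =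
      (l * m + k * n) * eval (pt v w) h + t * eval (pt v w) (dy z h) := by
  have e0 := congrArg (eval (pt v w)) HX
  have e1 := congrArg (eval (pt v w)) HY
  simp [pt_0, pt_1, pt_2, pt_3] at e0 e1
  simp [dl, dy, pt_0, pt_1, pt_2, pt_3]
  linear_combination l * e0 + k * e1 + eval (pt v w) (pderiv 0 h) * h0 +
    eval (pt v w) (pderiv 1 h) * h1 + eval (pt v w) (pderiv 2 h) * h2 +
    eval (pt v w) (pderiv 3 h) * h3

lemma ev_dx {v w : Fin 2 → K} {m : K} {h : MvPolynomial (Fin 4) K} (HX : EX m h) :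
    eval (pt v w) (dx v h) = m * eval (pt v w) h := by
  have e0 := congrArg (eval (pt v w)) HX
  simp [pt] at e0
  simp [dx, pt, e0]

lemma ev_dy {v w : Fin 2 → K} {m : K} {h : MvPolynomial (Fin 4) K} (HX : EY m h) :
    eval (pt v w) (dy w h) = m * eval (pt v w) h := by
  have e0 := congrArg (eval (pt v w)) HX
  simp [pt] at e0
  simp [dy, pt, e0]

def rs (v w z : Fin 2 → K) (h : MvPolynomial (Fin 4) K) : Polynomial K :=
  aeval ![Polynomial.C (v 0), Polynomial.C (v 1),
    Polynomial.C (w 0) + Polynomial.X * Polynomial.C (z 0),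
    Polynomial.C (w 1) + Polynomial.X * Polynomial.C (z 1)] h

lemma rs_eval (v w z : Fin 2 → K) (h : MvPolynomial (Fin 4) K) (s : K) :
    (rs v w z h).eval s = eval (pt v (fun i => w i + s * z i)) h := by
  induction h using MvPolynomial.induction_on with
  | C a => simp [rs]
  | add p q hp hq => simp only [rs, map_add, Polynomial.eval_add] at *; rw [hp, hq]
  | mul_X p i hp =>
    simp only [rs, map_mul, Polynomial.eval_mul] at *; rw [hp]
    fin_cases i <;> simp [pt] <;> exact Or.inl (mul_comm _ _)

lemma rs_deriv (v w z : Fin 2 → K) (h : MvPolynomial (Fin 4) K) :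
    (rs v w z h).derivative = rs v w z (dy z h) := by
  induction h using MvPolynomial.induction_on with
  | C a => simp [rs, dy]
  | add p q hp hq =>
    have : dy z (p + q) = dy z p + dy z q := by simp [dy]; ring
    rw [this]
    simp only [rs, map_add, Polynomial.derivative_add] at *; rw [hp, hq]
  | mul_X p i hp =>
    have : dy z (p * X i) = dy z p * X i + p * dy z (X i) := by
      simp [dy, Derivation.leibniz]; ring
    rw [this]
    simp only [rs, map_add, map_mul, Polynomial.derivative_mul] at *; rw [hp]
    congr 2
    fin_cases i <;> simp [dy]


structure Dat (A B : Fin 2 → Fin 2 → K) (f : MvPolynomial (Fin 4) K) (a b : ℕ) (c : K) : Prop where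
  ex : EX (a : K) f
  ey : EY (b : K) f
  sm : DefinesSmoothCurve f
  lg : dl A B f = C c * f

structure NF (A : Fin 2 → Fin 2 → K) (v v' : Fin 2 → K) (l l' t : K) : Prop where
  det : v 0 * v' 1 - v 1 * v' 0 ≠ 0
  v0 : A 0 0 * v 0 + A 0 1 * v 1 = l * v 0
  v1 : A 1 0 * v 0 + A 1 1 * v 1 = l * v 1
  u0 : A 0 0 * v' 0 + A 0 1 * v' 1 = l' * v' 0 + t * v 0
  u1 : A 1 0 * v' 0 + A 1 1 * v' 1 = l' * v' 1 + t * v 1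

lemma NF.swap {A : Fin 2 → Fin 2 → K} {v v' : Fin 2 → K} {l l' t : K} (H : NF A v v' l l' t)
    (ht : t = 0) : NF A v' v l' l 0 := by
  subst ht
  refine ⟨fun h => H.det (by linear_combination -h), ?_, ?_, ?_, ?_⟩
  · linear_combination H.u0
  · linear_combination H.u1
  · linear_combination H.v0
  · linear_combination H.v1

lemma indep_zero {v v' : Fin 2 → K} (h : v 0 * v' 1 - v 1 * v' 0 ≠ 0) {x y : K}
    (h1 : v 0 * x + v 1 * y = 0) (h2 : v' 0 * x + v' 1 * y = 0) : x = 0 ∧ y = 0 := by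
  constructor
  · apply (mul_eq_zero.mp (_ : (v 0 * v' 1 - v 1 * v' 0) * x = 0)).resolve_left h
    linear_combination v' 1 * h1 - v 1 * h2
  · apply (mul_eq_zero.mp (_ : (v 0 * v' 1 - v 1 * v' 0) * y = 0)).resolve_left h
    linear_combination v 0 * h2 - v' 0 * h1

lemma NF.scal {A : Fin 2 → Fin 2 → K} {v v' : Fin 2 → K} {l t : K} (H : NF A v v' l l t)
    (ht : t = 0) : A 0 0 = l ∧ A 0 1 = 0 ∧ A 1 0 = 0 ∧ A 1 1 = l := by
  subst ht
  have h1 := indep_zero H.det (x := A 0 0 - l) (y := A 0 1)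
    (by linear_combination H.v0) (by linear_combination H.u0)
  have h2 := indep_zero H.det (x := A 1 0) (y := A 1 1 - l)
    (by linear_combination H.v1) (by linear_combination H.u1)
  exact ⟨sub_eq_zero.mp h1.1, h1.2, h2.1, sub_eq_zero.mp h2.2⟩

lemma exists_compl {v : Fin 2 → K} (h : v 0 ≠ 0 ∨ v 1 ≠ 0) :
    ∃ u : Fin 2 → K, v 0 * u 1 - v 1 * u 0 ≠ 0 := by
  rcases h with h | h
  · exact ⟨![0, 1], by simpa using h⟩
  · exact ⟨![1, 0], by simpa using h⟩

lemma det_ne {v v' : Fin 2 → K} (h : v 0 * v' 1 - v 1 * v' 0 ≠ 0) : v 0 ≠ 0 ∨ v 1 ≠ 0 := by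
  by_contra hh
  push Not at hh
  exact h (by rw [hh.1, hh.2]; ring)

lemma exists_nf [IsAlgClosed K] [CharZero K] (A : Fin 2 → Fin 2 → K) :
    ∃ v v' l l' t, NF A v v' l l' t ∧ ((l ≠ l' ∧ t = 0) ∨ l = l') := by
  obtain ⟨v, l, hv, h0, h1⟩ : ∃ (v : Fin 2 → K) (l : K), (v 0 ≠ 0 ∨ v 1 ≠ 0) ∧
      A 0 0 * v 0 + A 0 1 * v 1 = l * v 0 ∧ A 1 0 * v 0 + A 1 1 * v 1 = l * v 1 := by
    by_cases h : A 1 0 = 0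
    · exact ⟨![1, 0], A 0 0, by simp, by simp, by simp [h]⟩
    · obtain ⟨r, hr⟩ := IsAlgClosed.exists_pow_nat_eq
        ((A 0 0 + A 1 1) ^ 2 - 4 * (A 0 0 * A 1 1 - A 0 1 * A 1 0)) (n := 2) (by norm_num)
      refine ⟨![(A 0 0 + A 1 1 + r) / 2 - A 1 1, A 1 0], (A 0 0 + A 1 1 + r) / 2, by simp [h], ?_, ?_⟩
      · simp
        linear_combination (-1 / 4) * hr
      · simp
        ring
  obtain ⟨u, hu⟩ := exists_compl hv
  obtain ⟨m, s, e0, e1⟩ : ∃ m s : K, A 0 0 * u 0 + A 0 1 * u 1 = m * u 0 + s * v 0 ∧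
      A 1 0 * u 0 + A 1 1 * u 1 = m * u 1 + s * v 1 := by
    refine ⟨(v 0 * (A 1 0 * u 0 + A 1 1 * u 1) - v 1 * (A 0 0 * u 0 + A 0 1 * u 1)) /
        (v 0 * u 1 - v 1 * u 0), ((A 0 0 * u 0 + A 0 1 * u 1) * u 1 -
        (A 1 0 * u 0 + A 1 1 * u 1) * u 0) / (v 0 * u 1 - v 1 * u 0), ?_, ?_⟩
    · rw [div_mul_eq_mul_div, div_mul_eq_mul_div, ← add_div, eq_div_iff hu]; ring
    · rw [div_mul_eq_mul_div, div_mul_eq_mul_div, ← add_div, eq_div_iff hu]; ring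
  by_cases hlm : l = m
  · subst hlm
    exact ⟨v, u, l, l, s, ⟨hu, h0, h1, e0, e1⟩, Or.inr rfl⟩
  · have hml : m - l ≠ 0 := sub_ne_zero.mpr (Ne.symm hlm)
    obtain ⟨k, hk⟩ : ∃ k : K, k * (m - l) = s := ⟨s / (m - l), by field_simp⟩
    refine ⟨v, fun i => u i + k * v i, l, m, 0, ⟨?_, h0, h1, ?_, ?_⟩, Or.inl ⟨hlm, rfl⟩⟩
    · intro h; apply hu; linear_combination h
    · linear_combination e0 + k * h0 - v 0 * hk
    · linear_combination e1 + k * h1 - v 1 * hk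

lemma sm_pt {f : MvPolynomial (Fin 4) K} (sm : DefinesSmoothCurve f) {v v' w w' : Fin 2 → K}
    (hv : v 0 * v' 1 - v 1 * v' 0 ≠ 0) (hw : w 0 * w' 1 - w 1 * w' 0 ≠ 0)
    (h1 : eval (pt v w) (dx v f) = 0) (h2 : eval (pt v w) (dx v' f) = 0)
    (h3 : eval (pt v w) (dy w f) = 0) (h4 : eval (pt v w) (dy w' f) = 0) : False := by
  simp only [dx, dy, map_add, map_mul, eval_C] at h1 h2 h3 h4
  obtain ⟨a0, a1⟩ := indep_zero hv h1 h2
  obtain ⟨a2, a3⟩ := indep_zero hw h3 h4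
  have had : Admissible (pt v w) := by
    constructor
    · have := det_ne hv
      simp [pt_0, pt_1]; tauto
    · have := det_ne hw
      simp [pt_2, pt_3]; tauto
  obtain ⟨i, hi⟩ := sm _ had
  fin_cases i
  · exact hi a0
  · exact hi a1
  · exact hi a2
  · exact hi a3

lemma exists_zero_y [IsAlgClosed K] [CharZero K] {h : MvPolynomial (Fin 4) K} {n : K}
    (HY : EY n h) (hn : n ≠ 0) (v : Fin 2 → K) :
    ∃ w : Fin 2 → K, (w 0 ≠ 0 ∨ w 1 ≠ 0) ∧ eval (pt v w) h = 0 := by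
  by_cases d1 : (rs v ![1, 0] ![0, 1] h).degree = 0
  · by_cases d2 : (rs v ![0, 1] ![1, 0] h).degree = 0
    · refine ⟨![1, 1], by simp, ?_⟩
      have k1 := congrArg (Polynomial.eval 1) (rs_deriv v ![1, 0] ![0, 1] h)
      have k2 := congrArg (Polynomial.eval 1) (rs_deriv v ![0, 1] ![1, 0] h)
      rw [Polynomial.eq_C_of_degree_eq_zero d1, Polynomial.derivative_C, rs_eval] at k1
      rw [Polynomial.eq_C_of_degree_eq_zero d2, Polynomial.derivative_C, rs_eval] at k2
      have t1 : (fun i => (![1, 0] : Fin 2 → K) i + 1 * (![0, 1] : Fin 2 → K) i) = ![1, 1] := by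
        ext i; fin_cases i <;> simp
      have t2 : (fun i => (![0, 1] : Fin 2 → K) i + 1 * (![1, 0] : Fin 2 → K) i) = ![1, 1] := by
        ext i; fin_cases i <;> simp
      rw [t1] at k1
      rw [t2] at k2
      simp [dy] at k1 k2
      have e := congrArg (eval (pt v ![1, 1])) HY
      simp [pt_2, pt_3, ← k1, ← k2] at e
      tauto
    · obtain ⟨s, hs⟩ := IsAlgClosed.exists_root _ d2
      rw [Polynomial.IsRoot, rs_eval] at hs
      exact ⟨_, by simp, hs⟩
  · obtain ⟨s, hs⟩ := IsAlgClosed.exists_root _ d1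
    rw [Polynomial.IsRoot, rs_eval] at hs
    exact ⟨_, by simp, hs⟩

lemma no_line [IsAlgClosed K] [CharZero K] {f : MvPolynomial (Fin 4) K} {m n : K}
    (HX : EX m f) (HY : EY n f) (hn : n ≠ 0) (sm : DefinesSmoothCurve f) {v : Fin 2 → K}
    (hv : v 0 ≠ 0 ∨ v 1 ≠ 0) (hl : ∀ w, eval (pt v w) f = 0) : False := by
  obtain ⟨v', hv'⟩ := exists_compl hv
  obtain ⟨w, hw, hz⟩ := exists_zero_y (EY_dx HY v') hn v
  obtain ⟨w', hw'⟩ := exists_compl hw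
  refine sm_pt sm hv' hw' ?_ hz ?_ ?_
  · rw [ev_dx HX, hl, mul_zero]
  · rw [ev_dy HY, hl, mul_zero]
  · have hR : rs v w w' f = 0 := by
      apply Polynomial.funext
      intro s
      rw [rs_eval, hl]; simp
    have := congrArg (Polynomial.eval 0) (rs_deriv v w w' f)
    rw [hR, rs_eval] at this
    simpa using this.symm

section corner
variable {A B : Fin 2 → Fin 2 → K} {f : MvPolynomial (Fin 4) K} {a b : ℕ} {c : K}
  {v v' w w' : Fin 2 → K} {l l' t m m' r : K}

lemma dl_sub (A B : Fin 2 → Fin 2 → K) (D : Dat A B f a b c) (u z : Fin 2 → K) (l t : K)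
    (h0 : A 0 0 * u 0 + A 0 1 * u 1 = l * u 0 + t * z 0)
    (h1 : A 1 0 * u 0 + A 1 1 * u 1 = l * u 1 + t * z 1) :
    dl A B (dx u f) = C (c - l) * dx u f - C t * dx z f := by
  have := dx_dl A B u z l t h0 h1 f
  rw [D.lg] at this
  have e : dx u (C c * f) = C c * dx u f := by simp [dx, Derivation.leibniz]; ring
  rw [e] at this
  rw [map_sub]
  linear_combination -this

lemma corner0 (D : Dat A B f a b c) (h0 : A 0 0 * v 0 + A 0 1 * v 1 = l * v 0)
    (h1 : A 1 0 * v 0 + A 1 1 * v 1 = l * v 1)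
    (k0 : B 0 0 * w 0 + B 0 1 * w 1 = m * w 0)
    (k1 : B 1 0 * w 0 + B 1 1 * w 1 = m * w 1) :
    (l * a + m * b - c) * eval (pt v w) f = 0 := by
  have := ev_dl (w := w) (k := m) (z := w) (t := 0) D.ex D.ey h0 h1 (by linear_combination k0) (by linear_combination k1)
  rw [D.lg] at this
  simp only [map_mul, eval_C] at this
  linear_combination -this

lemma cornerx (D : Dat A B f a b c) (H : NF A v v' l l' t)
    (k0 : B 0 0 * w 0 + B 0 1 * w 1 = m * w 0)
    (k1 : B 1 0 * w 0 + B 1 1 * w 1 = m * w 1) :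
    (l * (a - 1) + l' + m * b - c) * eval (pt v w) (dx v' f) + t * a * eval (pt v w) f = 0 := by
  have := ev_dl (w := w) (k := m) (z := w) (t := 0) (EX_dx D.ex v') (EY_dx D.ey v') H.v0 H.v1
    (by linear_combination k0) (by linear_combination k1)
  rw [dl_sub A B D v' v l' t H.u0 H.u1] at this
  simp only [map_sub, map_mul, eval_C, ev_dx D.ex] at this
  linear_combination -this

lemma cornerxx (D : Dat A B f a b c) (H : NF A v v' l l' t)
    (k0 : B 0 0 * w 0 + B 0 1 * w 1 = m * w 0)
    (k1 : B 1 0 * w 0 + B 1 1 * w 1 = m * w 1) :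
    (l * (a - 2) + 2 * l' + m * b - c) * eval (pt v w) (dx v' (dx v' f))
      + 2 * t * (a - 1) * eval (pt v w) (dx v' f) = 0 := by
  have h := ev_dl (w := w) (k := m) (z := w) (t := 0) (EX_dx (EX_dx D.ex v') v') (EY_dx (EY_dx D.ey v') v') H.v0 H.v1
    (by linear_combination k0) (by linear_combination k1)
  have h2 := dx_dl A B v' v l' t H.u0 H.u1 (dx v' f)
  rw [dl_sub A B D v' v l' t H.u0 H.u1] at h2
  have e : dx v' (C (c - l') * dx v' f - C t * dx v f)
      = C (c - l') * dx v' (dx v' f) - C t * dx v (dx v' f) := by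
    simp [dx, Derivation.leibniz, pd_comm 1 0]; ring
  rw [e] at h2
  have h3 := congrArg (eval (pt v w)) h2
  simp only [map_sub, map_add, map_mul, eval_C, ev_dx (EX_dx D.ex v')] at h3
  linear_combination -h - h3

end corner

def sw : Fin 4 → Fin 4 := ![2, 3, 0, 1]

lemma sw_inj : Function.Injective sw := by decide

lemma sw_pd0 (f : MvPolynomial (Fin 4) K) : pderiv 0 (rename sw f) = rename sw (pderiv 2 f) :=
  pderiv_rename sw_inj 2 f
lemma sw_pd1 (f : MvPolynomial (Fin 4) K) : pderiv 1 (rename sw f) = rename sw (pderiv 3 f) :=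
  pderiv_rename sw_inj 3 f
lemma sw_pd2 (f : MvPolynomial (Fin 4) K) : pderiv 2 (rename sw f) = rename sw (pderiv 0 f) :=
  pderiv_rename sw_inj 0 f
lemma sw_pd3 (f : MvPolynomial (Fin 4) K) : pderiv 3 (rename sw f) = rename sw (pderiv 1 f) :=
  pderiv_rename sw_inj 1 f

lemma Dat.swap {A B : Fin 2 → Fin 2 → K} {f : MvPolynomial (Fin 4) K} {a b : ℕ} {c : K}
    (D : Dat A B f a b c) : Dat B A (rename sw f) b a c := by
  have s0 : sw 0 = 2 := rfl
  have s1 : sw 1 = 3 := rfl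
  have s2 : sw 2 = 0 := rfl
  have s3 : sw 3 = 1 := rfl
  refine ⟨?_, ?_, ?_, ?_⟩
  · have := congrArg (rename sw) D.ey
    simp only [map_add, map_mul, rename_X, rename_C, s0, s1, s2, s3] at this
    rw [EX, sw_pd0, sw_pd1, this]
  · have := congrArg (rename sw) D.ex
    simp only [map_add, map_mul, rename_X, rename_C, s0, s1, s2, s3] at this
    rw [EY, sw_pd2, sw_pd3, this]
  · intro P hP
    obtain ⟨i, hi⟩ := D.sm (P ∘ sw) ⟨hP.2, hP.1⟩
    refine ⟨sw i, ?_⟩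
    rwa [pderiv_rename sw_inj, eval_rename]
  · have := congrArg (rename sw) D.lg
    simp only [dl, map_add, map_mul, rename_X, rename_C, s0, s1, s2, s3] at this
    rw [dl, sw_pd0, sw_pd1, sw_pd2, sw_pd3]
    linear_combination this

lemma sw_dx (u : Fin 2 → K) (f : MvPolynomial (Fin 4) K) (v w : Fin 2 → K) :
    eval (pt w v) (dx u (rename sw f)) = eval (pt v w) (dy u f) := by
  have : pt w v ∘ sw = pt v w := by ext i; fin_cases i <;> rfl
  simp [dx, dy, sw_pd0, sw_pd1, eval_rename, this]

lemma sw_ev (f : MvPolynomial (Fin 4) K) (v w : Fin 2 → K) :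
    eval (pt w v) (rename sw f) = eval (pt v w) f := by
  have : pt w v ∘ sw = pt v w := by ext i; fin_cases i <;> rfl
  simp [eval_rename, this]

section cases
variable {A B : Fin 2 → Fin 2 → K} {f : MvPolynomial (Fin 4) K} {a b : ℕ} {c : K}
  {v v' w w' : Fin 2 → K} {l l' t m m' r : K}

lemma cornery (D : Dat A B f a b c) (H : NF B w w' m m' r)
    (k0 : A 0 0 * v 0 + A 0 1 * v 1 = l * v 0)
    (k1 : A 1 0 * v 0 + A 1 1 * v 1 = l * v 1) :
    (m * (b - 1) + m' + l * a - c) * eval (pt v w) (dy w' f) + r * b * eval (pt v w) f = 0 := by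
  have := cornerx D.swap H k0 k1
  rwa [sw_dx, sw_ev] at this

lemma sm_corner (D : Dat A B f a b c) (hv : v 0 * v' 1 - v 1 * v' 0 ≠ 0)
    (hw : w 0 * w' 1 - w 1 * w' 0 ≠ 0)
    (h : eval (pt v w) f = 0) (h2 : eval (pt v w) (dx v' f) = 0)
    (h4 : eval (pt v w) (dy w' f) = 0) : False :=
  sm_pt D.sm hv hw (by rw [ev_dx D.ex, h, mul_zero]) h2 (by rw [ev_dy D.ey, h, mul_zero]) h4

/-- weights at a corner -/
lemma weights (D : Dat A B f a b c) (H : NF A v v' l l' 0) (G : NF B w w' m m' 0) :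
    ∃ i j : ℕ, i + j ≤ 1 ∧ c = l * a + m * b - (l - l') * i - (m - m') * j := by
  have c0 := corner0 D H.v0 H.v1 G.v0 G.v1
  have cx := cornerx D H G.v0 G.v1
  have cy := cornery D G H.v0 H.v1
  rw [zero_mul, zero_mul, add_zero] at cx cy
  rcases mul_eq_zero.mp c0 with h0 | h0
  · exact ⟨0, 0, by norm_num, by push_cast; linear_combination -h0⟩
  rcases mul_eq_zero.mp cx with h1 | h1
  · exact ⟨1, 0, by norm_num, by push_cast; linear_combination -h1⟩
  rcases mul_eq_zero.mp cy with h2 | h2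
  · exact ⟨0, 1, by norm_num, by push_cast; linear_combination -h2⟩
  exact (sm_corner D H.det G.det h0 h1 h2).elim

lemma pos_of [CharZero K] {d e : K} (hd : d ≠ 0) (he : e ≠ 0) {p q : ℕ} (hpq : p ≠ 0 ∨ q ≠ 0)
    (h : d * p + e * q = 0) : p ≠ 0 ∧ q ≠ 0 := by
  constructor
  · rintro rfl
    simp [he] at h
    tauto
  · rintro rfl
    simp [hd] at h
    tauto

lemma opp [CharZero K] (ha : 2 ≤ a) (hb : 2 ≤ b)
    (D : Dat A B f a b c) (H : NF A v v' l l' 0) (G : NF B w w' m m' 0) (hl : l ≠ l') (hm : m ≠ m') :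
    ∃ p q : ℕ, p ≠ 0 ∧ q ≠ 0 ∧ (l - l') * p + (m - m') * q = 0 := by
  obtain ⟨i, j, hij, e1⟩ := weights D H G
  obtain ⟨i', j', hij', e2⟩ := weights D (H.swap rfl) (G.swap rfl)
  have key : (l - l') * ((a - (i + i') : ℕ) : K) + (m - m') * ((b - (j + j') : ℕ) : K) = 0 := by
    rw [Nat.cast_sub (by omega), Nat.cast_sub (by omega)]
    push_cast
    linear_combination e2 - e1
  have := pos_of (sub_ne_zero.mpr hl) (sub_ne_zero.mpr hm) (by omega) key
  exact ⟨_, _, this.1, this.2, key⟩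

lemma case1 [CharZero K] (ha : 2 ≤ a) (hb : 2 ≤ b)
    (D : Dat A B f a b c) (H : NF A v v' l l' 0) (G : NF B w w' m m' 0) (hl : l ≠ l') (hm : m ≠ m') :
    False := by
  obtain ⟨p, q, hp, hq, e1⟩ := opp ha hb D H G hl hm
  obtain ⟨p', q', hp', hq', e2⟩ := opp ha hb D H (G.swap rfl) hl hm.symm
  have : (l - l') * ((p * q' + p' * q : ℕ) : K) = 0 := by
    push_cast
    linear_combination (q' : K) * e1 + (q : K) * e2
  rcases mul_eq_zero.mp this with h | h
  · exact hl (sub_eq_zero.mp h)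
  · have h := Nat.cast_eq_zero.mp h
    have := Nat.mul_pos (Nat.pos_of_ne_zero hp) (Nat.pos_of_ne_zero hq')
    omega

lemma case2' [IsAlgClosed K] [CharZero K] (hb : 2 ≤ b)
    (D : Dat A B f a b c) (H : NF A v v' l l' t) (G : NF B w w' m m r) (hc : l * a + m * b - c ≠ 0) :
    False := by
  refine no_line D.ex D.ey (Nat.cast_ne_zero.mpr (by omega)) D.sm (det_ne H.det) ?_
  have key : ∀ x : K, rs v (fun i => x * w' i) w f = 0 := by
    intro x
    by_contra hR
    have e : Polynomial.C (l * a + m * b - c) * rs v (fun i => x * w' i) w f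
        + Polynomial.C (r * x) * (rs v (fun i => x * w' i) w f).derivative = 0 := by
      apply Polynomial.funext
      intro s
      rw [rs_deriv]
      simp only [Polynomial.eval_add, Polynomial.eval_mul, Polynomial.eval_C, rs_eval,
        Polynomial.eval_zero]
      have := ev_dl (w := fun i => x * w' i + s * w i) (z := w) (t := r * x) (k := m)
        D.ex D.ey H.v0 H.v1
        (by linear_combination x * G.u0 + s * G.v0) (by linear_combination x * G.u1 + s * G.v1)
      rw [D.lg] at this
      simp only [map_mul, eval_C] at this
      linear_combination -this
    have e' : Polynomial.C (l * a + m * b - c) * rs v (fun i => x * w' i) w f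
        = Polynomial.C (-(r * x)) * (rs v (fun i => x * w' i) w f).derivative := by
      rw [Polynomial.C_neg]; linear_combination e
    have d1 := Polynomial.degree_C_mul (p := rs v (fun i => x * w' i) w f) hc
    have d2 := Polynomial.degree_derivative_lt hR
    rw [e'] at d1
    have d3 : (Polynomial.C (-(r * x)) * (rs v (fun i => x * w' i) w f).derivative).degree ≤
        (rs v (fun i => x * w' i) w f).derivative.degree := by
      rw [← Polynomial.smul_eq_C_mul]
      exact Polynomial.degree_smul_le _ _
    rw [d1] at d3
    exact absurd d3 (not_le.mpr d2)
  intro y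
  have h := congrArg (Polynomial.eval ((y 0 * w' 1 - y 1 * w' 0) / (w 0 * w' 1 - w 1 * w' 0)))
    (key ((w 0 * y 1 - w 1 * y 0) / (w 0 * w' 1 - w 1 * w' 0)))
  rw [rs_eval] at h
  have hdet := G.det
  rw [Polynomial.eval_zero] at h
  rw [← h]
  congr 2
  congr 1
  ext i
  rw [div_mul_eq_mul_div, div_mul_eq_mul_div, ← add_div, eq_div_iff hdet]
  fin_cases i
  · simp; ring
  · simp; ring

lemma case2 [IsAlgClosed K] [CharZero K] (ha : 2 ≤ a) (hb : 2 ≤ b)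
    (D : Dat A B f a b c) (H : NF A v v' l l' 0) (G : NF B w w' m m r) (hl : l ≠ l') : False := by
  by_cases hc : l * a + m * b - c = 0
  · refine case2' hb D (H.swap rfl) G ?_
    intro hc'
    have : (l - l') * (a : K) = 0 := by linear_combination hc - hc'
    rcases mul_eq_zero.mp this with h | h
    · exact hl (sub_eq_zero.mp h)
    · have := Nat.cast_eq_zero.mp h
      omega
  · exact case2' hb D H G hc

lemma case4b [CharZero K] (ha : 2 ≤ a) (hb : 2 ≤ b)
    (D : Dat A B f a b c) (H : NF A v v' l l t) (G : NF B w w' m m r) (ht : t ≠ 0) (hr : r ≠ 0) :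
    False := by
  have c0 := corner0 D H.v0 H.v1 G.v0 G.v1
  have cx := cornerx D H G.v0 G.v1
  have cy := cornery D G H.v0 H.v1
  have cxx := cornerxx D H G.v0 G.v1
  have cyy := cornerxx D.swap G H.v0 H.v1
  rw [sw_dx] at cyy
  have ha0 : (a : K) ≠ 0 := Nat.cast_ne_zero.mpr (by omega)
  have ha1 : (a : K) - 1 ≠ 0 := by
    rw [sub_ne_zero]; exact_mod_cast (by omega : a ≠ 1)
  have hb1 : (b : K) - 1 ≠ 0 := by
    rw [sub_ne_zero]; exact_mod_cast (by omega : b ≠ 1)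
  by_cases hc : l * a + m * b - c = 0
  · refine sm_corner D H.det G.det ?_ ?_ ?_
    · have : (t * a) * eval (pt v w) f = 0 := by
        linear_combination cx - eval (pt v w) (dx v' f) * hc
      exact (mul_eq_zero.mp this).resolve_left (mul_ne_zero ht ha0)
    · have : (2 * t * (a - 1)) * eval (pt v w) (dx v' f) = 0 := by
        linear_combination cxx - eval (pt v w) (dx v' (dx v' f)) * hc
      exact (mul_eq_zero.mp this).resolve_left (mul_ne_zero (mul_ne_zero two_ne_zero ht) ha1)
    · have : (2 * r * (b - 1)) * eval (pt v w) (dy w' f) = 0 := by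
        linear_combination cyy - eval (pt w v) (dx w' (dx w' (rename sw f))) * hc
      exact (mul_eq_zero.mp this).resolve_left (mul_ne_zero (mul_ne_zero two_ne_zero hr) hb1)
  · have h0 := (mul_eq_zero.mp c0).resolve_left hc
    refine sm_corner D H.det G.det h0 ?_ ?_
    · have : (l * a + m * b - c) * eval (pt v w) (dx v' f) = 0 := by
        linear_combination cx - t * a * h0
      exact (mul_eq_zero.mp this).resolve_left hc
    · have : (l * a + m * b - c) * eval (pt v w) (dy w' f) = 0 := by
        linear_combination cy - r * b * h0
      exact (mul_eq_zero.mp this).resolve_left hc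

lemma case4c [IsAlgClosed K] [CharZero K] (ha : 2 ≤ a) (hb : 2 ≤ b)
    (D : Dat A B f a b c) (H : NF A v v' l l t) (G : NF B w w' m m 0) (ht : t ≠ 0) :
    False := by
  refine no_line D.ex D.ey (Nat.cast_ne_zero.mpr (by omega)) D.sm (det_ne H.det) ?_
  intro y
  obtain ⟨b0, b1, b2, b3⟩ := G.scal rfl
  have k0 : B 0 0 * y 0 + B 0 1 * y 1 = m * y 0 := by rw [b0, b1]; ring
  have k1 : B 1 0 * y 0 + B 1 1 * y 1 = m * y 1 := by rw [b2, b3]; ring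
  have c0 := corner0 D H.v0 H.v1 k0 k1
  have cx := cornerx D H k0 k1
  have ha0 : (a : K) ≠ 0 := Nat.cast_ne_zero.mpr (by omega)
  by_cases hc : l * a + m * b - c = 0
  · have : (t * a) * eval (pt v y) f = 0 := by
      linear_combination cx - eval (pt v y) (dx v' f) * hc
    exact (mul_eq_zero.mp this).resolve_left (mul_ne_zero ht ha0)
  · exact (mul_eq_zero.mp c0).resolve_left hc

lemma main_mat [IsAlgClosed K] [CharZero K] (ha : 2 ≤ a) (hb : 2 ≤ b) (D : Dat A B f a b c) :
    ∃ s t : K, (A 0 0 = s ∧ A 0 1 = 0 ∧ A 1 0 = 0 ∧ A 1 1 = s) ∧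
      (B 0 0 = t ∧ B 0 1 = 0 ∧ B 1 0 = 0 ∧ B 1 1 = t) := by
  obtain ⟨v, v', l, l', t, H, hH⟩ := exists_nf A
  obtain ⟨w, w', m, m', r, G, hG⟩ := exists_nf B
  rcases hH with ⟨hl, rfl⟩ | rfl
  · rcases hG with ⟨hm, rfl⟩ | rfl
    · exact (case1 ha hb D H G hl hm).elim
    · exact (case2 ha hb D H G hl).elim
  · rcases hG with ⟨hm, rfl⟩ | rfl
    · exact (case2 hb ha D.swap G H hm).elim
    · by_cases ht : t = 0
      · by_cases hr : r = 0
        · exact ⟨l, m, H.scal ht, G.scal hr⟩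
        · subst ht
          exact (case4c hb ha D.swap G H hr).elim
      · by_cases hr : r = 0
        · subst hr
          exact (case4c ha hb D H G ht).elim
        · exact (case4b ha hb D H G ht hr).elim

end cases

lemma bihom_EX {a b : ℕ} {f : MvPolynomial (Fin 4) K} (h : IsBihomogeneous a b f) :
    EX (a : K) f := by
  have hw : f.IsWeightedHomogeneous (![1, 1, 0, 0] : Fin 4 → ℕ) a := by
    intro d hd
    have := (h d (mem_support_iff.mpr hd)).1
    rw [Finsupp.weight_apply, Finsupp.sum_fintype _ _ (by simp)]
    simp [Fin.sum_univ_four, this]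
  have := hw.sum_weight_X_mul_pderiv
  simp [Fin.sum_univ_four] at this
  rw [EX, this]; simp

lemma bihom_EY {a b : ℕ} {f : MvPolynomial (Fin 4) K} (h : IsBihomogeneous a b f) :
    EY (b : K) f := by
  have hw : f.IsWeightedHomogeneous (![0, 0, 1, 1] : Fin 4 → ℕ) b := by
    intro d hd
    have := (h d (mem_support_iff.mpr hd)).2
    rw [Finsupp.weight_apply, Finsupp.sum_fintype _ _ (by simp)]
    simp [Fin.sum_univ_four, this]
  have := hw.sum_weight_X_mul_pderiv
  simp [Fin.sum_univ_four] at this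
  rw [EY, this]; simp

end aux

/-- (`h⁰(TQ(−log C)) = 0` for a smooth curve of bidegree `(a,b)`,
`a, b ≥ 2`.)  If `f` is bihomogeneous of bidegree `(a,b)` with `a, b ≥ 2` defining
a smooth curve, and `p₀, p₁` are linear forms in `x₀, x₁`, `q₀, q₁` are linear
forms in `y₀, y₁`, and `c ∈ K` with
`p₀·∂f/∂x₀ + p₁·∂f/∂x₁ + q₀·∂f/∂y₀ + q₁·∂f/∂y₁ = c·f`, then the derivation is
a linear combination of the two Euler derivations: `p₀ = s·x₀`, `p₁ = s·x₁`,
`q₀ = t·y₀`, `q₁ = t·y₁` for some `s, t ∈ K`. -/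
theorem no_logarithmic_vector_fields
    {K : Type*} [Field K] [IsAlgClosed K] [CharZero K]
    (a b : ℕ) (ha : 2 ≤ a) (hb : 2 ≤ b)
    (f : MvPolynomial (Fin 4) K)
    (hfbi : IsBihomogeneous a b f) (hfsm : DefinesSmoothCurve f)
    (p₀ p₁ q₀ q₁ : MvPolynomial (Fin 4) K)
    (hp₀ : p₀ ∈ Submodule.span K ({X 0, X 1} : Set (MvPolynomial (Fin 4) K)))
    (hp₁ : p₁ ∈ Submodule.span K ({X 0, X 1} : Set (MvPolynomial (Fin 4) K)))
    (hq₀ : q₀ ∈ Submodule.span K ({X 2, X 3} : Set (MvPolynomial (Fin 4) K)))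
    (hq₁ : q₁ ∈ Submodule.span K ({X 2, X 3} : Set (MvPolynomial (Fin 4) K)))
    (c : K)
    (hlog : p₀ * pderiv 0 f + p₁ * pderiv 1 f + q₀ * pderiv 2 f + q₁ * pderiv 3 f
        = C c * f) :
    ∃ s t : K, p₀ = C s * X 0 ∧ p₁ = C s * X 1 ∧ q₀ = C t * X 2 ∧ q₁ = C t * X 3 := by
  obtain ⟨a0, a1, rfl⟩ := Submodule.mem_span_pair.mp hp₀
  obtain ⟨a2, a3, rfl⟩ := Submodule.mem_span_pair.mp hp₁
  obtain ⟨b0, b1, rfl⟩ := Submodule.mem_span_pair.mp hq₀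
  obtain ⟨b2, b3, rfl⟩ := Submodule.mem_span_pair.mp hq₁
  have D : Dat ![![a0, a1], ![a2, a3]] ![![b0, b1], ![b2, b3]] f a b c := by
    refine ⟨bihom_EX hfbi, bihom_EY hfbi, hfsm, ?_⟩
    rw [← hlog]
    simp [dl, smul_eq_C_mul]
  obtain ⟨s, t, ⟨h0, h1, h2, h3⟩, k0, k1, k2, k3⟩ := main_mat ha hb D
  simp at h0 h1 h2 h3 k0 k1 k2 k3
  refine ⟨s, t, ?_, ?_, ?_, ?_⟩
  · simp [h0, h1, smul_eq_C_mul]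
  · simp [h2, h3, smul_eq_C_mul]
  · simp [k0, k1, smul_eq_C_mul]
  · simp [k2, k3, smul_eq_C_mul]
end
end
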